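/- Let {φ_e}_{e∈E} be a conformal iterated function system in ℝⁿ with finite alphabet E satisfying the Strong Separation Condition: φ_a(X) ∩ φ_b(X) = ∅ for all a ≠ b in E. Then the limit set J is v-directed porous for every unit vector v ∈ S^{n-1}. -/

import Mathlib

/-!
Fix `x = π ω` in the limit set `J` and a scale `r`. Following the coding of `x`, pick the first
cylinder `A = φ_{ω₁…ω_m}(X)` whose diameter is small compared with `r`. By bounded distortion its
parent has derivative of size comparable to `r`, and strong separation, transported by the maps
`φ_ρ` for the proper prefixes `ρ` of `ω₁…ω_m`, shows that every point of `J` outside `A` is at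
distance at least `const · r` from `A` (`CIFS.gap`, `CIFS.gap_cylinder`). The line `x + ℝ v` starts
in `A` and leaves the small set `A` before time `r / 2`, so by the intermediate value theorem it
contains a point whose distance to `A` is exactly half of this gap (or less); the ball of that
radius around the point misses both `A` and `J \ A` (`exists_ball_on_line`). Only connectedness of
the line is used, never its straightness after pulling back.

Two estimates are required about `φ_ρ`, both at the scale of its derivative:

* an upper bound for the diameter of `φ_ρ(X)`, obtained by chaining mean value inequalities on
  balls through the connected set `W` (`CIFS.exists_diam_bound`);
* the inclusion `φ_ρ(B(y, δ)) ⊇ B(φ_ρ y, κ δ)`, with `κ` comparable to `‖Dφ_ρ‖`. Since the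
  derivatives are not assumed continuous, the inverse function theorem is not available; instead
  `x ↦ ‖φ_ρ x - z‖ + κ ‖x - y‖` is minimised over a closed ball, and surjectivity of the derivative
  forces `φ_ρ x = z` at the minimum (`exists_preimage_of_dist_lt`).
-/

open Metric Set Filter

/-- `por A x r` is the porosity of the set `A` at the point `x` at scale `r`:
the supremum of all `c ≥ 0` such that some open ball of radius `c·r` is contained
in `B(x,r) ∖ A`. -/
noncomputable def por {X : Type*} [MetricSpace X] (A : Set X) (x : X) (r : ℝ) : ℝ :=
  sSup {c : ℝ | 0 ≤ c ∧ ∃ y : X, Metric.ball y (c * r) ⊆ Metric.ball x r \ A}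

/-- `A` is porous at the point `x`. -/
def PorousAt {X : Type*} [MetricSpace X] (A : Set X) (x : X) : Prop :=
  ∃ c ∈ Set.Ioo (0 : ℝ) 1, ∃ r₀ > (0 : ℝ), ∀ r ∈ Set.Ioo (0 : ℝ) r₀, c ≤ por A x r

/-- `A` is porous. -/
def Porous {X : Type*} [MetricSpace X] (A : Set X) : Prop :=
  ∃ c ∈ Set.Ioo (0 : ℝ) 1, ∃ r₀ > (0 : ℝ), ∀ x ∈ A, ∀ r ∈ Set.Ioo (0 : ℝ) r₀, c ≤ por A x r

/-- Directed porosity of `A` at `x` at scale `r` in direction `v`: the supremum of all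
`c ≥ 0` such that some open ball of radius `c·r` centered on the line `x + ℝ·v` is
contained in `B(x,r) ∖ A`. -/
noncomputable def porDir {V : Type*} [NormedAddCommGroup V] [NormedSpace ℝ V]
    (v : V) (A : Set V) (x : V) (r : ℝ) : ℝ :=
  sSup {c : ℝ | 0 ≤ c ∧ ∃ t : ℝ,
    Metric.ball (x + t • v) (c * r) ⊆ Metric.ball x r \ A}

/-- `A` is `v`-directed porous. -/
def DirectedPorous {V : Type*} [NormedAddCommGroup V] [NormedSpace ℝ V]
    (v : V) (A : Set V) : Prop :=
  ∃ c ∈ Set.Ioo (0 : ℝ) 1, ∃ r₀ > (0 : ℝ), ∀ x ∈ A, ∀ r ∈ Set.Ioo (0 : ℝ) r₀,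
    c ≤ porDir v A x r

/-- A conformal iterated function system in `ℝⁿ` (single-vertex conformal GDMS):
a compact connected set `X` equal to the closure of its interior, an open connected
set `W ⊇ X`, and injective `C¹` maps `φ e : W → W` with conformal (invertibly similar)
derivatives `D e`, mapping `X` into `X`, with Lipschitz constant at most `s ∈ (0,1)`
on `W`, satisfying the Open Set Condition. -/
structure CIFS (n : ℕ) (E : Type*) where
  X : Set (EuclideanSpace ℝ (Fin n))
  W : Set (EuclideanSpace ℝ (Fin n))
  φ : E → EuclideanSpace ℝ (Fin n) → EuclideanSpace ℝ (Fin n)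
  D : E → EuclideanSpace ℝ (Fin n) → EuclideanSpace ℝ (Fin n) →L[ℝ] EuclideanSpace ℝ (Fin n)
  s : ℝ
  hs : s ∈ Set.Ioo (0 : ℝ) 1
  hXcompact : IsCompact X
  hXconn : IsConnected X
  hXreg : X = closure (interior X)
  hWopen : IsOpen W
  hWconn : IsConnected W
  hXW : X ⊆ W
  hInj : ∀ e, Set.InjOn (φ e) W
  hMapsW : ∀ e, Set.MapsTo (φ e) W W
  hMapsX : ∀ e, Set.MapsTo (φ e) X X
  hDeriv : ∀ e, ∀ x ∈ W, HasFDerivAt (φ e) (D e x) x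
  hConf : ∀ e, ∀ x ∈ W, IsConformalMap (D e x)
  hLip : ∀ e, LipschitzOnWith s.toNNReal (φ e) W
  hOSC : ∀ a b : E, a ≠ b → Disjoint (φ a '' interior X) (φ b '' interior X)

namespace CIFS

variable {n : ℕ} {E : Type*}

/-- The composition `φ_ω = φ_{ω₁} ∘ ⋯ ∘ φ_{ωₙ}` associated to a finite word `ω`. -/
def compWord (S : CIFS n E) (ω : List E) :
    EuclideanSpace ℝ (Fin n) → EuclideanSpace ℝ (Fin n) :=
  ω.foldr (fun e g => S.φ e ∘ g) id

/-- The derivative of `φ_ω` at a point, computed by the chain rule. -/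
noncomputable def derivWord (S : CIFS n E) :
    List E → EuclideanSpace ℝ (Fin n) →
      (EuclideanSpace ℝ (Fin n) →L[ℝ] EuclideanSpace ℝ (Fin n))
  | [], _ => ContinuousLinearMap.id ℝ _
  | e :: ω, x => (S.D e (S.compWord ω x)).comp (S.derivWord ω x)

/-- The Bounded Distortion Property: there is `K ≥ 1` such that
`‖Dφ_ω(p)‖ ≤ K·‖Dφ_ω(q)‖` for every nonempty word `ω` and all `p, q ∈ W`. -/
def BDP (S : CIFS n E) : Prop :=
  ∃ K : ℝ, 1 ≤ K ∧ ∀ ω : List E, ω ≠ [] → ∀ p ∈ S.W, ∀ q ∈ S.W,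
    ‖S.derivWord ω p‖ ≤ K * ‖S.derivWord ω q‖

end CIFS

/-! ### Two facts about Euclidean spaces -/

/-- A quantitative open mapping property: if `f` is differentiable on a closed ball with derivatives
expanding every vector by more than `κ`, the image of the ball of radius `δ` around `y` contains the
ball of radius `κ δ` around `f y`. -/
lemma exists_preimage_of_dist_lt {V : Type*} [NormedAddCommGroup V] [NormedSpace ℝ V]
    [FiniteDimensional ℝ V] {f : V → V} {f' : V → V →L[ℝ] V} {y z : V} {δ κ : ℝ}
    (hδ : 0 < δ) (hκ : 0 < κ)
    (hf : ∀ x ∈ closedBall y δ, HasFDerivAt f (f' x) x)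
    (hlow : ∀ x ∈ closedBall y δ, ∀ u, u ≠ 0 → κ * ‖u‖ < ‖f' x u‖)
    (hz : ‖f y - z‖ < κ * δ) : ∃ x ∈ ball y δ, f x = z := by
  have hcont : ContinuousOn (fun x => ‖f x - z‖ + κ * ‖x - y‖) (closedBall y δ) := by
    have h1 : ContinuousOn f (closedBall y δ) := fun x hx =>
      (hf x hx).continuousAt.continuousWithinAt
    fun_prop
  have : ProperSpace V := FiniteDimensional.proper ℝ V
  obtain ⟨x, hx, hmin⟩ := (isCompact_closedBall y δ).exists_isMinOn
    ⟨y, mem_closedBall_self hδ.le⟩ hcont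
  have hxb : x ∈ ball y δ := by
    have h := hmin (mem_closedBall_self hδ.le)
    simp only [mem_ofPred_eq, sub_self, norm_zero, mul_zero, add_zero] at h
    rw [mem_ball, dist_eq_norm]
    have h2 := norm_nonneg (f x - z)
    exact lt_of_mul_lt_mul_left (by linarith) hκ.le
  refine ⟨x, hxb, ?_⟩
  by_contra hne
  have hinj : Function.Injective (f' x : V →ₗ[ℝ] V) := by
    rw [← LinearMap.ker_eq_bot, LinearMap.ker_eq_bot']
    intro u hu
    by_contra hu0
    have h := hlow x hx u hu0
    have h3 : f' x u = 0 := hu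
    rw [h3, norm_zero] at h
    have := mul_nonneg hκ.le (norm_nonneg u)
    linarith
  obtain ⟨u, hu⟩ := (LinearMap.injective_iff_surjective.1 hinj) (-(f x - z))
  have hu : f' x u = -(f x - z) := hu
  have hw : 0 < ‖f x - z‖ := norm_pos_iff.2 (sub_ne_zero.2 hne)
  have hu0 : u ≠ 0 := by
    rintro rfl
    rw [map_zero, eq_comm, neg_eq_zero] at hu
    rw [hu, norm_zero] at hw
    exact lt_irrefl _ hw
  have hlt := hlow x hx u hu0
  rw [hu, norm_neg] at hlt
  -- Moving in the direction `u` decreases the first summand at rate `‖f x - z‖`, which beats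
  -- the rate `κ ‖u‖` at which the second one can grow.
  have hline : HasDerivAt (fun t : ℝ => x + t • u) u 0 := by
    simpa using ((hasDerivAt_id (0 : ℝ)).smul_const u).const_add x
  have hd : HasDerivAt (fun t : ℝ => f (x + t • u)) (-(f x - z)) 0 := by
    have h0 : HasFDerivAt f (f' x) (x + (0 : ℝ) • u) := by simpa using hf x hx
    have := h0.comp_hasDerivAt (0 : ℝ) hline
    rwa [hu] at this
  have hε : 0 < (‖f x - z‖ - κ * ‖u‖) / 2 := by linarith
  have hlit := (hasDerivAt_iff_isLittleO.1 hd).def hε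
  have hlit' := hlit.filter_mono (nhdsWithin_le_nhds (s := Ioi (0 : ℝ)))
  have hin : ∀ᶠ t : ℝ in nhds 0, x + t • u ∈ ball y δ := by
    have h0 : ball y δ ∈ nhds (x + (0 : ℝ) • u) := by simpa using isOpen_ball.mem_nhds hxb
    exact hline.continuousAt.eventually h0
  have hpos : ∀ᶠ t : ℝ in nhdsWithin 0 (Ioi 0), 0 < t := self_mem_nhdsWithin
  have hle1 : ∀ᶠ t : ℝ in nhdsWithin 0 (Ioi 0), t < 1 :=
    nhdsWithin_le_nhds (Iio_mem_nhds one_pos)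
  obtain ⟨t, ht1, ht2, ht0, htle⟩ := (hlit'.and
    ((hin.filter_mono nhdsWithin_le_nhds).and (hpos.and hle1))).exists
  simp only [zero_smul, add_zero, sub_zero, Real.norm_eq_abs, abs_of_pos ht0] at ht1
  have h1 := hmin (ball_subset_closedBall ht2)
  simp only [mem_ofPred_eq] at h1
  have h2 : ‖x + t • u - y‖ ≤ ‖x - y‖ + t * ‖u‖ := by
    rw [add_sub_right_comm]
    refine (norm_add_le _ _).trans_eq ?_
    rw [norm_smul, Real.norm_of_nonneg ht0.le]
  have h3 : ‖f (x + t • u) - z‖ ≤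
      (‖f x - z‖ - κ * ‖u‖) / 2 * t + (1 - t) * ‖f x - z‖ := by
    have : f (x + t • u) - z =
        (f (x + t • u) - f x - t • (-(f x - z))) + (1 - t) • (f x - z) := by module
    rw [this]
    refine (norm_add_le _ _).trans (add_le_add ht1 ?_)
    rw [norm_smul, Real.norm_of_nonneg (by linarith)]
  have h4 := mul_le_mul_of_nonneg_left h2 hκ.le
  have h5 : 0 < t * (‖f x - z‖ - κ * ‖u‖) := mul_pos ht0 (by linarith)
  nlinarith

/-- If a set `J` has a piece `A ∋ x` of diameter at most `r / 4` that is at distance at least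
`2 c r` from `J \ A`, then every line through `x` has a point at distance `c r` from `A`, and the
ball of radius `c r` around that point misses `J`. -/
lemma exists_ball_on_line {V : Type*} [NormedAddCommGroup V] [NormedSpace ℝ V] {v : V}
    (hv : ‖v‖ = 1) {J A : Set V} {x : V} {r c : ℝ} (hr : 0 < r) (hc : 0 < c) (hc4 : c ≤ 1 / 4)
    (hxA : x ∈ A) (hxJ : x ∈ J) (hdiam : ∀ a ∈ A, dist x a ≤ r / 4)
    (hgap : ∀ z ∈ J, z ∉ A → ∀ a ∈ A, 2 * c * r ≤ dist z a) :
    c ≤ porDir v J x r := by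
  have hcr : 0 < c * r := mul_pos hc hr
  have hne : A.Nonempty := ⟨x, hxA⟩
  have hcr4 : c * r ≤ r / 4 := by nlinarith
  have hcont : ContinuousOn (fun t : ℝ => infDist (x + t • v) A) (Icc 0 (r / 2)) := by
    refine ((continuous_infDist_pt A).comp ?_).continuousOn
    fun_prop
  have hnorm : ∀ t : ℝ, dist (x + t • v) x = |t| := fun t => by
    rw [dist_eq_norm, add_sub_cancel_left, norm_smul, hv, mul_one, Real.norm_eq_abs]
  have hend : r / 4 ≤ infDist (x + (r / 2) • v) A := by
    refine (le_infDist hne).2 fun a ha => ?_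
    have h1 := hdiam a ha
    have h2 := hnorm (r / 2)
    rw [abs_of_pos (by linarith)] at h2
    have h3 := dist_triangle_right (x + (r / 2) • v) x a
    linarith
  have hmem : c * r ∈ Icc (infDist (x + (0 : ℝ) • v) A) (infDist (x + (r / 2) • v) A) := by
    refine ⟨?_, hcr4.trans hend⟩
    rw [zero_smul, add_zero, infDist_zero_of_mem hxA]
    exact hcr.le
  obtain ⟨t, ⟨ht0, ht2⟩, ht⟩ := intermediate_value_Icc (by linarith) hcont hmem
  have ht : infDist (x + t • v) A = c * r := ht
  refine le_csSup ⟨1, ?_⟩ ⟨hc.le, t, ?_⟩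
  · -- The centre of an admissible ball lies in `ball x r`, while `x` itself is not in the ball.
    rintro b ⟨hb0, t', hb⟩
    by_contra! hb1
    have hbr : 0 < b * r := mul_pos (by linarith) hr
    have h1 := (hb (mem_ball_self hbr)).1
    have h2 : x ∉ ball (x + t' • v) (b * r) := fun h => (hb h).2 hxJ
    rw [mem_ball] at h1
    rw [mem_ball, dist_comm] at h2
    nlinarith
  · intro z hz
    rw [mem_ball] at hz
    refine ⟨?_, fun hzJ => ?_⟩
    · have h2 := hnorm t
      rw [abs_of_nonneg ht0] at h2
      have := dist_triangle z (x + t • v) x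
      rw [mem_ball]
      linarith
    · by_cases hzA : z ∈ A
      · have := infDist_le_dist_of_mem (x := x + t • v) hzA
        rw [dist_comm] at hz
        linarith
      · have h1 := (le_infDist hne).2 (hgap z hzJ hzA)
        have h2 : infDist z A ≤ infDist (x + t • v) A + dist z (x + t • v) :=
          infDist_le_infDist_add_dist
        linarith

/-- A conformal linear map scales every vector by its operator norm. -/
lemma norm_apply_of_isConformalMap {V : Type*} [NormedAddCommGroup V] [NormedSpace ℝ V]
    [Nontrivial V] {f : V →L[ℝ] V} (hf : IsConformalMap f) (u : V) : ‖f u‖ = ‖f‖ * ‖u‖ := by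
  obtain ⟨c, hc, li, rfl⟩ := hf
  simp [norm_smul, li.norm_toContinuousLinearMap]

namespace CIFS

variable {n : ℕ} {E : Type*}

/-! ### Words -/

lemma compWord_append (S : CIFS n E) (l l' : List E) (x : EuclideanSpace ℝ (Fin n)) :
    S.compWord (l ++ l') x = S.compWord l (S.compWord l' x) := by
  induction l with
  | nil => rfl
  | cons e l ih => exact congrArg (S.φ e) ih

lemma mapsTo_W (S : CIFS n E) (l : List E) : MapsTo (S.compWord l) S.W S.W := by
  induction l with
  | nil => exact fun x hx => hx
  | cons e l ih => exact fun x hx => S.hMapsW e (ih hx)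

lemma mapsTo_X (S : CIFS n E) (l : List E) : MapsTo (S.compWord l) S.X S.X := by
  induction l with
  | nil => exact fun x hx => hx
  | cons e l ih => exact fun x hx => S.hMapsX e (ih hx)

lemma injOn_W (S : CIFS n E) (l : List E) : InjOn (S.compWord l) S.W := by
  induction l with
  | nil => exact fun x _ y _ h => h
  | cons e l ih =>
    exact fun x hx y hy h => ih hx hy (S.hInj e (S.mapsTo_W l hx) (S.mapsTo_W l hy) h)

lemma hasFDerivAt_compWord (S : CIFS n E) (l : List E) {x : EuclideanSpace ℝ (Fin n)}
    (hx : x ∈ S.W) : HasFDerivAt (S.compWord l) (S.derivWord l x) x := by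
  induction l with
  | nil => exact hasFDerivAt_id x
  | cons e l ih => exact (S.hDeriv e _ (S.mapsTo_W l hx)).comp x ih

lemma isConformalMap_derivWord (S : CIFS n E) (l : List E) {x : EuclideanSpace ℝ (Fin n)}
    (hx : x ∈ S.W) : IsConformalMap (S.derivWord l x) := by
  induction l with
  | nil => exact isConformalMap_id
  | cons e l ih => exact (S.hConf e _ (S.mapsTo_W l hx)).comp ih

lemma derivWord_append (S : CIFS n E) (l l' : List E) (x : EuclideanSpace ℝ (Fin n)) :
    S.derivWord (l ++ l') x = (S.derivWord l (S.compWord l' x)).comp (S.derivWord l' x) := by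
  induction l with
  | nil => rfl
  | cons e l ih =>
    rw [List.cons_append, derivWord, derivWord, ih, compWord_append,
      ContinuousLinearMap.comp_assoc]

lemma norm_D_le (S : CIFS n E) (e : E) {x : EuclideanSpace ℝ (Fin n)} (hx : x ∈ S.W) :
    ‖S.D e x‖ ≤ S.s := by
  have := (S.hDeriv e x hx).le_of_lipschitzOn (S.hWopen.mem_nhds hx) (S.hLip e)
  rwa [Real.coe_toNNReal _ S.hs.1.le] at this

lemma norm_derivWord_le (S : CIFS n E) (l : List E) {x : EuclideanSpace ℝ (Fin n)}
    (hx : x ∈ S.W) : ‖S.derivWord l x‖ ≤ S.s ^ l.length := by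
  induction l with
  | nil => exact ContinuousLinearMap.norm_id_le.trans_eq (pow_zero _).symm
  | cons e l ih =>
    rw [List.length_cons, pow_succ']
    exact (ContinuousLinearMap.opNorm_comp_le _ _).trans
      (mul_le_mul (S.norm_D_le e (S.mapsTo_W l hx)) ih (norm_nonneg _) S.hs.1.le)

/-- The inequality of `CIFS.BDP` with constant `K`, stated for all words: at the empty word it holds
as soon as `1 ≤ K`. -/
def Distortion (S : CIFS n E) (K : ℝ) : Prop :=
  ∀ l : List E, ∀ p ∈ S.W, ∀ q ∈ S.W, ‖S.derivWord l p‖ ≤ K * ‖S.derivWord l q‖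

lemma exists_distortion {S : CIFS n E} (h : S.BDP) : ∃ K : ℝ, 1 ≤ K ∧ S.Distortion K := by
  obtain ⟨K, hK, hl⟩ := h
  refine ⟨K, hK, fun l p hp q hq => ?_⟩
  rcases eq_or_ne l [] with rfl | hne
  · exact le_mul_of_one_le_left (norm_nonneg _) hK
  · exact hl l hne p hp q hq

lemma norm_derivWord_append_le {S : CIFS n E} {K : ℝ} (hK : S.Distortion K) (l l' : List E)
    {p : EuclideanSpace ℝ (Fin n)} (hp : p ∈ S.W) :
    ‖S.derivWord (l ++ l') p‖ ≤ K * ‖S.derivWord l p‖ := by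
  rw [derivWord_append]
  refine (ContinuousLinearMap.opNorm_comp_le _ _).trans ?_
  have h1 := hK l _ (S.mapsTo_W l' hp) p hp
  have h2 : ‖S.derivWord l' p‖ ≤ 1 :=
    (S.norm_derivWord_le l' hp).trans (pow_le_one₀ S.hs.1.le S.hs.2.le)
  exact (mul_le_of_le_one_right (norm_nonneg _) h2).trans h1

/-! ### Size of cylinders and gaps between them -/

/-- Near a point of `W`, all the maps `φ_ω` are Lipschitz at the scale of their derivative. -/
lemma local_bound {S : CIFS n E} {K : ℝ} (hK0 : 0 ≤ K) (hK : S.Distortion K)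
    {p : EuclideanSpace ℝ (Fin n)} (hp : p ∈ S.W) {x : EuclideanSpace ℝ (Fin n)} (hx : x ∈ S.W) :
    ∃ U ∈ nhds x, ∃ C, 0 ≤ C ∧ ∀ y ∈ U, ∀ l : List E,
      dist (S.compWord l y) (S.compWord l x) ≤ C * ‖S.derivWord l p‖ := by
  obtain ⟨ε, hε, hb⟩ := Metric.isOpen_iff.1 S.hWopen x hx
  refine ⟨ball x ε, ball_mem_nhds x hε, K * ε, by positivity, fun y hy l => ?_⟩
  have h := (convex_ball x ε).norm_image_sub_le_of_norm_hasFDerivWithin_le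
    (fun z hz => (S.hasFDerivAt_compWord l (hb hz)).hasFDerivWithinAt)
    (fun z hz => hK l z (hb hz) p hp) (mem_ball_self hε) hy
  rw [← dist_eq_norm, ← dist_eq_norm] at h
  refine h.trans ?_
  have h2 : dist y x ≤ ε := (mem_ball.1 hy).le
  calc K * ‖S.derivWord l p‖ * dist y x ≤ K * ‖S.derivWord l p‖ * ε := by gcongr
    _ = K * ε * ‖S.derivWord l p‖ := by ring

/-- The diameter of `φ_ω(X)` is at most a constant times the derivative of `φ_ω`. As `X` need not be
convex, points are linked through `W`. -/
lemma exists_diam_bound {S : CIFS n E} {K : ℝ} (hK0 : 0 ≤ K) (hK : S.Distortion K)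
    {p : EuclideanSpace ℝ (Fin n)} (hp : p ∈ S.X) :
    ∃ C, 0 < C ∧ ∀ x ∈ S.X, ∀ y ∈ S.X, ∀ l : List E,
      dist (S.compWord l x) (S.compWord l y) ≤ C * ‖S.derivWord l p‖ := by
  have hpW := S.hXW hp
  have hpair : ∀ x ∈ S.W, ∀ y ∈ S.W, ∃ C, 0 ≤ C ∧ ∀ l : List E,
      dist (S.compWord l x) (S.compWord l y) ≤ C * ‖S.derivWord l p‖ := by
    intro x hx y hy
    refine S.hWconn.isPreconnected.induction₂ (fun x y => ∃ C, 0 ≤ C ∧ ∀ l : List E,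
      dist (S.compWord l x) (S.compWord l y) ≤ C * ‖S.derivWord l p‖) ?_ ?_ ?_ hx hy
    · intro x hx
      obtain ⟨U, hU, C, hC, h⟩ := local_bound hK0 hK hpW hx
      filter_upwards [nhdsWithin_le_nhds hU] with y hy
      exact ⟨C, hC, fun l => by rw [dist_comm]; exact h y hy l⟩
    · rintro x y z - - - ⟨C, hC, h⟩ ⟨C', hC', h'⟩
      refine ⟨C + C', by positivity, fun l => ?_⟩
      rw [add_mul]
      exact (dist_triangle _ _ _).trans (add_le_add (h l) (h' l))
    · rintro x y - - ⟨C, hC, h⟩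
      exact ⟨C, hC, fun l => by rw [dist_comm]; exact h l⟩
  have hunif : ∃ C, 0 ≤ C ∧ ∀ x ∈ S.X, ∀ l : List E,
      dist (S.compWord l x) (S.compWord l p) ≤ C * ‖S.derivWord l p‖ := by
    refine S.hXcompact.induction_on (p := fun s => ∃ C, 0 ≤ C ∧ ∀ x ∈ s, ∀ l : List E,
      dist (S.compWord l x) (S.compWord l p) ≤ C * ‖S.derivWord l p‖) ?_ ?_ ?_ ?_
    · exact ⟨0, le_rfl, fun x hx => hx.elim⟩
    · rintro s t hst ⟨C, hC, h⟩
      exact ⟨C, hC, fun x hx => h x (hst hx)⟩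
    · rintro s t ⟨C, hC, h⟩ ⟨C', hC', h'⟩
      refine ⟨max C C', le_max_of_le_left hC, ?_⟩
      rintro x (hx | hx) l
      · exact (h x hx l).trans (by gcongr; exact le_max_left _ _)
      · exact (h' x hx l).trans (by gcongr; exact le_max_right _ _)
    · intro x hx
      obtain ⟨U, hU, C, hC, h⟩ := local_bound hK0 hK hpW (S.hXW hx)
      obtain ⟨C', hC', h'⟩ := hpair x (S.hXW hx) p hpW
      refine ⟨U, nhdsWithin_le_nhds hU, C + C', by positivity, fun y hy l => ?_⟩
      rw [add_mul]
      exact (dist_triangle _ _ _).trans (add_le_add (h y hy l) (h' l))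
  obtain ⟨C, hC, h⟩ := hunif
  refine ⟨2 * C + 1, by positivity, fun x hx y hy l => ?_⟩
  have h1 := h x hx l
  have h2 := h y hy l
  have h3 := dist_triangle_right (S.compWord l x) (S.compWord l y) (S.compWord l p)
  have h4 := norm_nonneg (S.derivWord l p)
  nlinarith

/-- A scale `δ` below the distance between any two first-level pieces and below the distance from
`X` to the complement of `W`. -/
lemma exists_sep [Finite E] (S : CIFS n E)
    (hSSC : ∀ a b : E, a ≠ b → Disjoint (S.φ a '' S.X) (S.φ b '' S.X)) :
    ∃ δ > 0, (∀ x ∈ S.X, closedBall x δ ⊆ S.W) ∧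
      ∀ a b : E, a ≠ b → ∀ x ∈ S.φ a '' S.X, ∀ y ∈ S.φ b '' S.X, δ ≤ dist x y := by
  have hcomp : ∀ a, IsCompact (S.φ a '' S.X) := fun a =>
    S.hXcompact.image_of_continuousOn ((S.hLip a).continuousOn.mono S.hXW)
  obtain ⟨δ₀, hδ₀, hsub⟩ := S.hXcompact.exists_cthickening_subset_open S.hWopen S.hXW
  have hev : ∀ᶠ δ : ℝ in nhdsWithin 0 (Ioi 0), ∀ a b : E, a ≠ b →
      ∀ x ∈ S.φ a '' S.X, ∀ y ∈ S.φ b '' S.X, δ ≤ dist x y := by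
    rw [eventually_all]
    intro a
    rw [eventually_all]
    intro b
    by_cases hab : a = b
    · exact Eventually.of_forall fun _ h => (h hab).elim
    obtain ⟨r, hr, h⟩ := exists_pos_forall_lt_edist (hcomp a) (hcomp b).isClosed (hSSC a b hab)
    have hlt : ∀ᶠ δ : ℝ in nhdsWithin 0 (Ioi 0), δ < r :=
      nhdsWithin_le_nhds (Iio_mem_nhds (NNReal.coe_pos.2 hr))
    filter_upwards [hlt] with δ hδ _ x hx y hy
    have := h x hx y hy
    rw [edist_nndist, ENNReal.coe_lt_coe] at this
    exact hδ.le.trans (NNReal.coe_lt_coe.2 this).le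
  have hlt : ∀ᶠ δ : ℝ in nhdsWithin 0 (Ioi 0), δ < δ₀ :=
    nhdsWithin_le_nhds (Iio_mem_nhds hδ₀)
  have hpos : ∀ᶠ δ : ℝ in nhdsWithin 0 (Ioi 0), 0 < δ := self_mem_nhdsWithin
  obtain ⟨δ, h1, h2, h3⟩ := (hev.and (hlt.and hpos)).exists
  refine ⟨δ, h3, fun x hx => ?_, h1⟩
  exact (closedBall_subset_closedBall h2.le).trans
    ((closedBall_subset_cthickening hx δ₀).trans hsub)

/-- The map `φ_ω` does not contract the distance of `δ`-separated points of `X` by more than a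
constant times its derivative: otherwise the image of one point would be covered by the image of
the `δ`-ball around the other, contradicting injectivity. -/
lemma gap {S : CIFS n E} [Nontrivial (EuclideanSpace ℝ (Fin n))] {K δ : ℝ} (hK1 : 1 ≤ K)
    (hK : S.Distortion K) (hδ : 0 < δ) (hW : ∀ x ∈ S.X, closedBall x δ ⊆ S.W)
    {p : EuclideanSpace ℝ (Fin n)} (hp : p ∈ S.W) (l : List E)
    {x y : EuclideanSpace ℝ (Fin n)} (hx : x ∈ S.X) (hy : y ∈ S.X) (hxy : δ ≤ dist x y) :
    ‖S.derivWord l p‖ / (2 * K) * δ ≤ dist (S.compWord l x) (S.compWord l y) := by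
  by_contra! hlt
  have hL : 0 < ‖S.derivWord l p‖ := norm_pos_iff.2 (S.isConformalMap_derivWord l hp).ne_zero
  have hK0 : 0 < K := by linarith
  have hκ : 0 < ‖S.derivWord l p‖ / (2 * K) := by positivity
  obtain ⟨y', hy', heq⟩ := exists_preimage_of_dist_lt (f := S.compWord l)
    (f' := S.derivWord l) (z := S.compWord l y) hδ hκ
    (fun z hz => S.hasFDerivAt_compWord l (hW x hx hz))
    (fun z hz u hu => by
      rw [norm_apply_of_isConformalMap (S.isConformalMap_derivWord l (hW x hx hz))]
      refine mul_lt_mul_of_pos_right ?_ (norm_pos_iff.2 hu)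
      rw [div_lt_iff₀ (by positivity)]
      have := hK l p hp z (hW x hx hz)
      linarith)
    (by rwa [← dist_eq_norm])
  have := S.injOn_W l (hW x hx (ball_subset_closedBall hy')) (S.hXW hy) heq
  rw [this, mem_ball, dist_comm] at hy'
  linarith

/-! ### Cylinders along an infinite word -/

/-- The prefix of length `m` of an infinite word. -/
def pre (ω : ℕ → E) (m : ℕ) : List E := List.ofFn fun i : Fin m => ω i

lemma length_pre (ω : ℕ → E) (m : ℕ) : (pre ω m).length = m := by simp [pre]

lemma pre_succ (ω : ℕ → E) (m : ℕ) : pre ω (m + 1) = pre ω m ++ [ω m] := by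
  rw [pre, List.ofFn_succ', List.concat_eq_append]
  rfl

lemma exists_pre_append (ω : ℕ → E) {k m : ℕ} (h : k ≤ m) : ∃ l, pre ω m = pre ω k ++ l := by
  induction m, h using Nat.le_induction with
  | base => exact ⟨[], by simp⟩
  | succ m _ ih =>
    obtain ⟨l, hl⟩ := ih
    exact ⟨l ++ [ω m], by rw [pre_succ, hl, List.append_assoc]⟩

/-- A point of the limit set outside the cylinder of `ω` of level `m + 1` stays at a distance from
it comparable to the derivative of the parent map, of level `m`: if the codings separate at
position `k ≤ m`, the two points lie in different first-level pieces of `φ_{ω|k}(X)`. -/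
lemma gap_cylinder {S : CIFS n E} [Nontrivial (EuclideanSpace ℝ (Fin n))] {K δ : ℝ} (hK1 : 1 ≤ K)
    (hK : S.Distortion K) (hδ : 0 < δ) (hW : ∀ x ∈ S.X, closedBall x δ ⊆ S.W)
    (hsep : ∀ a b : E, a ≠ b → ∀ x ∈ S.φ a '' S.X, ∀ y ∈ S.φ b '' S.X, δ ≤ dist x y)
    {p : EuclideanSpace ℝ (Fin n)} (hp : p ∈ S.W) {π : (ℕ → E) → EuclideanSpace ℝ (Fin n)}
    (hπ : ∀ ω m, π ω ∈ S.compWord (pre ω m) '' S.X) (ω ω' : ℕ → E) (m : ℕ)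
    (hω' : π ω' ∉ S.compWord (pre ω (m + 1)) '' S.X) {a : EuclideanSpace ℝ (Fin n)}
    (ha : a ∈ S.compWord (pre ω (m + 1)) '' S.X) :
    ‖S.derivWord (pre ω m) p‖ * (δ / (2 * K ^ 2)) ≤ dist (π ω') a := by
  classical
  have hK0 : 0 < K := by linarith
  have hex : ∃ k, pre ω' (k + 1) ≠ pre ω (k + 1) :=
    ⟨m, fun h => hω' (h ▸ hπ ω' (m + 1))⟩
  set k := Nat.find hex with hk
  have hkm : k ≤ m := Nat.find_min' hex fun h => hω' (h ▸ hπ ω' (m + 1))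
  have hpre : pre ω' k = pre ω k := by
    rcases hk0 : k with _ | j
    · simp [pre]
    · exact not_not.1 (Nat.find_min hex (m := j) (by omega))
  have hkne : ω' k ≠ ω k := fun h => Nat.find_spec hex (by
    rw [← hk, pre_succ, pre_succ, hpre, h])
  obtain ⟨l, hl⟩ := exists_pre_append ω (Nat.succ_le_succ hkm)
  obtain ⟨l', hl'⟩ := exists_pre_append ω hkm
  obtain ⟨x, hx, rfl⟩ := ha
  obtain ⟨y, hy, hye⟩ := hπ ω' (k + 1)
  rw [pre_succ, hpre, compWord_append] at hye
  rw [hl, Nat.succ_eq_add_one, pre_succ, List.append_assoc, compWord_append, ← hye, compWord_append]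
  have h1 := gap hK1 hK hδ hW hp (pre ω k)
    (x := S.compWord [ω' k] y) (y := S.compWord [ω k] (S.compWord l x))
    (S.mapsTo_X _ hy) (S.mapsTo_X _ (S.mapsTo_X _ hx))
    (hsep _ _ hkne _ ⟨y, hy, rfl⟩ _ ⟨_, S.mapsTo_X l hx, rfl⟩)
  refine le_trans ?_ h1
  have h2 : ‖S.derivWord (pre ω m) p‖ ≤ K * ‖S.derivWord (pre ω k) p‖ := by
    rw [hl']
    exact norm_derivWord_append_le hK _ _ hp
  calc ‖S.derivWord (pre ω m) p‖ * (δ / (2 * K ^ 2))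
      ≤ K * ‖S.derivWord (pre ω k) p‖ * (δ / (2 * K ^ 2)) := by gcongr
    _ = ‖S.derivWord (pre ω k) p‖ / (2 * K) * δ := by field_simp

end CIFS

/-- A finite CIFS satisfying the Strong Separation Condition has
`v`-directed porous limit set `J = range π` for every unit vector `v`. -/
theorem stmt6 {n : ℕ} {E : Type*} [Finite E] [Nontrivial E]
    (S : CIFS n E) (hBDP : S.BDP)
    (hSSC : ∀ a b : E, a ≠ b → Disjoint (S.φ a '' S.X) (S.φ b '' S.X))
    (π : (ℕ → E) → EuclideanSpace ℝ (Fin n))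
    (hπ : ∀ ω : ℕ → E, ∀ m : ℕ,
      π ω ∈ S.compWord (List.ofFn fun i : Fin m => ω i) '' S.X) :
    ∀ v : EuclideanSpace ℝ (Fin n), ‖v‖ = 1 → DirectedPorous v (Set.range π) := by
  intro v hv
  have hnt : Nontrivial (EuclideanSpace ℝ (Fin n)) :=
    ⟨v, 0, norm_ne_zero_iff.1 (by rw [hv]; exact one_ne_zero)⟩
  obtain ⟨K, hK1, hK⟩ := CIFS.exists_distortion hBDP
  have hK0 : 0 < K := by linarith
  obtain ⟨p, hp⟩ := S.hXconn.nonempty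
  have hpW := S.hXW hp
  obtain ⟨C, hC, hdiam⟩ := CIFS.exists_diam_bound hK0.le hK hp
  obtain ⟨δ, hδ, hW, hsep⟩ := S.exists_sep hSSC
  have hπ' : ∀ ω m, π ω ∈ S.compWord (CIFS.pre ω m) '' S.X := hπ
  have hc0 : 0 < δ / (16 * C * K ^ 2) := by positivity
  refine ⟨min (1 / 4) (δ / (16 * C * K ^ 2)), ⟨lt_min (by norm_num) hc0,
    (min_le_left _ _).trans_lt (by norm_num)⟩, 4 * C, by positivity, ?_⟩
  rintro _ ⟨ω, rfl⟩ r ⟨hr, hrC⟩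
  -- The last level `m` at which `4 C ‖Dφ_{ω|m}‖` is still at least `r`.
  have hlim : ∃ m, 4 * C * ‖S.derivWord (CIFS.pre ω (m + 1)) p‖ < r := by
    obtain ⟨m, hm⟩ := exists_pow_lt_of_lt_one (div_pos hr (mul_pos four_pos hC)) S.hs.2
    refine ⟨m, ?_⟩
    rw [lt_div_iff₀' (by positivity)] at hm
    have h1 := S.norm_derivWord_le (CIFS.pre ω (m + 1)) hpW
    rw [CIFS.length_pre] at h1
    have h2 : S.s ^ (m + 1) ≤ S.s ^ m := pow_le_pow_of_le_one S.hs.1.le S.hs.2.le m.le_succ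
    have h3 := mul_le_mul_of_nonneg_left (h1.trans h2) (by positivity : 0 ≤ 4 * C)
    linarith
  classical
  obtain ⟨m, hm1, hm2⟩ : ∃ m, 4 * C * ‖S.derivWord (CIFS.pre ω (m + 1)) p‖ < r ∧
      r ≤ 4 * C * ‖S.derivWord (CIFS.pre ω m) p‖ := by
    refine ⟨Nat.find hlim, Nat.find_spec hlim, ?_⟩
    rcases h0 : Nat.find hlim with _ | j
    · have : ‖S.derivWord (CIFS.pre ω 0) p‖ = 1 := ContinuousLinearMap.norm_id
      rw [this]
      linarith
    · exact not_lt.1 (Nat.find_min hlim (m := j) (by omega))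
  refine exists_ball_on_line (A := S.compWord (CIFS.pre ω (m + 1)) '' S.X) hv hr
    (lt_min (by norm_num) hc0) (min_le_left _ _) (hπ' ω (m + 1)) ⟨ω, rfl⟩ ?_ ?_
  · rintro _ ⟨a, ha, rfl⟩
    obtain ⟨x, hx, hxe⟩ := hπ' ω (m + 1)
    rw [← hxe]
    have := hdiam x hx a ha (CIFS.pre ω (m + 1))
    linarith
  · rintro _ ⟨ω', rfl⟩ hz a ha
    refine le_trans ?_ (CIFS.gap_cylinder hK1 hK hδ hW hsep hpW hπ' ω ω' m hz ha)
    calc 2 * min (1 / 4) (δ / (16 * C * K ^ 2)) * r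
        ≤ 2 * (δ / (16 * C * K ^ 2)) * (4 * C * ‖S.derivWord (CIFS.pre ω m) p‖) := by
          gcongr
          exact min_le_right _ _
      _ = ‖S.derivWord (CIFS.pre ω m) p‖ * (δ / (2 * K ^ 2)) := by field_simp; norm_num
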